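/- arXiv:2304.07450 — 3 statements merged into one kernel-verified Lean document; each statement's English description precedes it below -/
import Mathlib

section
/- Let K ≥ 1, δ ≥ 0, and let S^n, S^m : {1,…,K} → ℝ be the scores of two items n and m under K basic models. Let a, b : {1,…,K} → ℝ satisfy a_k ≥ 0, b_k ≥ 0, Σ_{k=1}^K a_k = 1, Σ_{k=1}^K b_k = 1, and |b_k − a_k| ≤ δ for every k. Define z^k = S^n_k − S^m_k, the ensemble scores S^{n,ens} = Σ_k a_k S^n_k and S^{m,ens} = Σ_k b_k S^m_k, and z^ens = S^{n,ens} − S^{m,ens}. For each k define the ambiguity A_k = l_b(z^k) − l_b(z^ens) − (σ(z^ens) − 1)(z^k − z^ens), where l_b(z) = log(1 + exp(−z)) and σ(x) = 1/(1 + exp(−x)). Then l_b(z^ens) ≤ Σ_{k=1}^K a_k l_b(z^k) + δ Σ_{k=1}^K |S^m_k| − Σ_{k=1}^K a_k A_k. -/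
/-- The pair-wise (BPR) loss of a score difference. -/
noncomputable def bprLoss (z : ℝ) : ℝ := Real.log (1 + Real.exp (-z))

/-- The sigmoid function. -/
noncomputable def sigmoid (x : ℝ) : ℝ := 1 / (1 + Real.exp (-x))

/-!
For weights `a` summing to one, averaging the Bregman terms at `p` expresses `l p` exactly as the
average of `l`, minus the average ambiguity, plus the slope at `p` times `p - ∑ k, a k * z k`.
This last term vanishes when `p` is the `a`-mean of the `z k`; weighting the second item by `b`
instead of `a` displaces `p` by `∑ k, (a k - b k) * Sm k`, at most `δ * ∑ k, |Sm k|` in absolute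
value. The BPR loss has slope `sigmoid p - 1 ∈ (-1, 0)`, so the displacement costs no more than
that.
-/

section WeightedSums

variable {ι R : Type*} {s : Finset ι}

theorem error_ambiguity_decomposition [CommRing R] {a : ι → R} (hsa : ∑ i ∈ s, a i = 1)
    (l : R → R) (c p : R) (x : ι → R) :
    l p = ∑ i ∈ s, a i * l (x i) + c * (p - ∑ i ∈ s, a i * x i)
      - ∑ i ∈ s, a i * (l (x i) - l p - c * (x i - p)) := by
  have sum_ambiguity : ∑ i ∈ s, a i * (l (x i) - l p - c * (x i - p)) =
      ∑ i ∈ s, a i * l (x i) - l p - c * (∑ i ∈ s, a i * x i - p) := by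
    simp only [mul_sub, mul_left_comm _ c, Finset.sum_sub_distrib, ← Finset.mul_sum,
      ← Finset.sum_mul, hsa, one_mul]
  rw [sum_ambiguity]
  ring

theorem sum_mul_sub_sum_mul_sub_eq_sum_sub_mul [Ring R] (a b x y : ι → R) :
    (∑ i ∈ s, a i * x i - ∑ i ∈ s, b i * y i) - ∑ i ∈ s, a i * (x i - y i) =
      ∑ i ∈ s, (a i - b i) * y i := by
  simp only [mul_sub, sub_mul, Finset.sum_sub_distrib]
  abel

theorem abs_sum_mul_le_mul_sum_abs [Ring R] [LinearOrder R] [IsOrderedRing R]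
    {w : ι → R} {δ : R} (hw : ∀ i ∈ s, |w i| ≤ δ) (x : ι → R) :
    |∑ i ∈ s, w i * x i| ≤ δ * ∑ i ∈ s, |x i| :=
  calc |∑ i ∈ s, w i * x i|
      ≤ ∑ i ∈ s, |w i * x i| := Finset.abs_sum_le_sum_abs _ _
    _ = ∑ i ∈ s, |w i| * |x i| := by simp only [abs_mul]
    _ ≤ ∑ i ∈ s, δ * |x i| := by gcongr with i hi; exact hw i hi
    _ = δ * ∑ i ∈ s, |x i| := (Finset.mul_sum ..).symm

end WeightedSums

theorem sigmoid_eq_real_sigmoid (x : ℝ) : sigmoid x = Real.sigmoid x := by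
  rw [sigmoid, Real.sigmoid_def, one_div]

theorem abs_sigmoid_sub_one_lt_one (x : ℝ) : |sigmoid x - 1| < 1 := by
  rw [sigmoid_eq_real_sigmoid, abs_lt]
  constructor <;> linarith [Real.sigmoid_pos x, Real.sigmoid_lt_one x]

theorem pairwise_error_ambiguity_bound_general {ι : Type*} [Fintype ι] {δ : ℝ}
    {Sn Sm a b : ι → ℝ} (hsa : ∑ k, a k = 1) (hab : ∀ k, |b k - a k| ≤ δ)
    {z : ι → ℝ} (hz : ∀ k, z k = Sn k - Sm k)
    {zens : ℝ} (hzens : zens = (∑ k, a k * Sn k) - ∑ k, b k * Sm k)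
    {A : ι → ℝ}
    (hA : ∀ k, A k =
      bprLoss (z k) - bprLoss zens - (sigmoid zens - 1) * (z k - zens)) :
    bprLoss zens ≤
      (∑ k, a k * bprLoss (z k)) + δ * (∑ k, |Sm k|) - ∑ k, a k * A k := by
  have displacement : zens - ∑ k, a k * z k = ∑ k, (a k - b k) * Sm k := by
    simp only [hz, hzens, sum_mul_sub_sum_mul_sub_eq_sum_sub_mul]
  have displacement_cost :
      (sigmoid zens - 1) * (zens - ∑ k, a k * z k) ≤ δ * ∑ k, |Sm k| :=
    calc (sigmoid zens - 1) * (zens - ∑ k, a k * z k)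
        ≤ |(sigmoid zens - 1) * (zens - ∑ k, a k * z k)| := le_abs_self _
      _ = |sigmoid zens - 1| * |zens - ∑ k, a k * z k| := abs_mul _ _
      _ ≤ |zens - ∑ k, a k * z k| :=
        mul_le_of_le_one_left (abs_nonneg _) (abs_sigmoid_sub_one_lt_one zens).le
      _ ≤ δ * ∑ k, |Sm k| := by
        rw [displacement]
        exact abs_sum_mul_le_mul_sum_abs (fun k _ => abs_sub_comm (a k) (b k) ▸ hab k) Sm
  calc bprLoss zens
      = ∑ k, a k * bprLoss (z k) + (sigmoid zens - 1) * (zens - ∑ k, a k * z k)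
          - ∑ k, a k * A k := by
        simp only [hA]
        exact error_ambiguity_decomposition hsa bprLoss _ zens z
    _ ≤ ∑ k, a k * bprLoss (z k) + δ * ∑ k, |Sm k| - ∑ k, a k * A k := by gcongr

/-- Error-ambiguity decomposition bound for the pair-wise (BPR) loss with
item-level weights: the BPR loss of the ensemble score difference is bounded
by the weighted sum of basic-model BPR losses, plus `δ` times the sum of the
absolute scores of item `m`, minus the weighted sum of the ambiguities. -/
theorem pairwise_error_ambiguity_bound
    (K : ℕ) (hK : 1 ≤ K) (δ : ℝ) (hδ : 0 ≤ δ)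
    (Sn Sm : Fin K → ℝ) (a b : Fin K → ℝ)
    (ha : ∀ k, 0 ≤ a k) (hb : ∀ k, 0 ≤ b k)
    (hsa : ∑ k, a k = 1) (hsb : ∑ k, b k = 1)
    (hab : ∀ k, |b k - a k| ≤ δ)
    (z : Fin K → ℝ) (hz : ∀ k, z k = Sn k - Sm k)
    (zens : ℝ) (hzens : zens = (∑ k, a k * Sn k) - ∑ k, b k * Sm k)
    (A : Fin K → ℝ)
    (hA : ∀ k, A k =
      bprLoss (z k) - bprLoss zens - (sigmoid zens - 1) * (z k - zens)) :
    bprLoss zens ≤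
      (∑ k, a k * bprLoss (z k)) + δ * (∑ k, |Sm k|) - ∑ k, a k * A k := by
  exact pairwise_error_ambiguity_bound_general hsa hab hz hzens hA
end

section
/- Let N ≥ 1 and K ≥ 1, and let S_{n,k} ∈ ℝ for n ∈ {1,…,N}, k ∈ {1,…,K} be the scores of N items (indexed in ground-truth ranking order) under K basic models. Let δ ≥ 0 and let weights w_{n,k} ∈ ℝ satisfy w_{n,k} ≥ 0, Σ_{k=1}^K w_{n,k} = 1 for every n, and |w_{n,k} − w_{m,k}| ≤ δ for all n, m, k. Define the ensemble scores S^ens_n = Σ_{k=1}^K w_{n,k} S_{n,k}. For a score vector x : {1,…,N} → ℝ define g_n(x) = log(1 + Σ_{m=n+1}^N exp(−(x_n − x_m))) and the list-wise loss L(x) = Σ_{n=1}^N g_n(x). For each n, k define the ambiguity A_{n,k} = g_n(S_{·,k}) − g_n(S^ens) + Σ_{m=n+1}^N [exp(−(S^ens_n − S^ens_m)) / (1 + Σ_{j=n+1}^N exp(−(S^ens_n − S^ens_j)))] · ((S_{n,k} − S_{m,k}) − (S^ens_n − S^ens_m)). Then L(S^ens) ≤ Σ_{k=1}^K (max_{1≤n≤N}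 w_{n,k}) L(S_{·,k}) + δ · N · max_{1≤m≤N} Σ_{k=1}^K |S_{m,k}| − Σ_{n=1}^N Σ_{k=1}^K w_{n,k} A_{n,k}. -/
/-- Summand of the list-wise Plackett–Luce loss at position `n`:
`gₙ(x) = log(1 + Σ_{m > n} exp(−(xₙ − xₘ)))`. -/
noncomputable def gPL {N : ℕ} (n : Fin N) (x : Fin N → ℝ) : ℝ :=
  Real.log (1 + ∑ m ∈ Finset.univ.filter (fun m => n < m),
    Real.exp (-(x n - x m)))

/-- The list-wise Plackett–Luce loss (up to an additive constant). -/
noncomputable def LPL {N : ℕ} (x : Fin N → ℝ) : ℝ := ∑ n, gPL n x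

/-!
Averaging the ambiguities at position `n` with the weights `w n` recovers `gₙ(Sᵉⁿˢ)` exactly, up to
a first-order term. This term would vanish if all items shared the same weights; for item-level
weights it is an average, with Plackett–Luce probabilities of total mass less than one, of the
drifts `∑ k, (w m k - w n k) * S m k`, each of which is at most `δ * ∑ k, |S m k|`. Since every
`gₙ` is nonnegative, `w n k` may finally be replaced by its maximum over the items.
-/

open Finset

section WeightedSums

variable {ι κ R : Type*}

lemma sum_mul_le_mul_sum_abs [Ring R] [LinearOrder R] [IsOrderedRing R] {s : Finset κ}
    {a b : κ → R} {δ : R} (ha : ∀ k ∈ s, |a k| ≤ δ) :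
    ∑ k ∈ s, a k * b k ≤ δ * ∑ k ∈ s, |b k| := by
  rw [mul_sum]
  refine sum_le_sum fun k hk => ?_
  calc a k * b k ≤ |a k| * |b k| := (le_abs_self _).trans_eq (abs_mul _ _)
    _ ≤ δ * |b k| := mul_le_mul_of_nonneg_right (ha k hk) (abs_nonneg _)

lemma sum_mul_le_of_sum_le_one [Semiring R] [PartialOrder R] [IsOrderedRing R] {s : Finset ι}
    {p b : ι → R} {c : R} (hp : ∀ i ∈ s, 0 ≤ p i) (hp_sum : ∑ i ∈ s, p i ≤ 1)
    (hb : ∀ i ∈ s, b i ≤ c) (hc : 0 ≤ c) :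
    ∑ i ∈ s, p i * b i ≤ c :=
  calc ∑ i ∈ s, p i * b i ≤ ∑ i ∈ s, p i * c :=
        sum_le_sum fun i hi => mul_le_mul_of_nonneg_left (hb i hi) (hp i hi)
    _ = (∑ i ∈ s, p i) * c := (sum_mul _ _ _).symm
    _ ≤ c := mul_le_of_le_one_left hc hp_sum

lemma sum_sum_mul_le_sum_iSup_mul_sum [Fintype ι] [Fintype κ] (w : ι → κ → ℝ) {f : ι → κ → ℝ}
    (hf : ∀ i k, 0 ≤ f i k) :
    ∑ i, ∑ k, w i k * f i k ≤ ∑ k, (⨆ i, w i k) * ∑ i, f i k := by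
  simp_rw [mul_sum]
  rw [sum_comm]
  exact sum_le_sum fun k _ => sum_le_sum fun i _ =>
    mul_le_mul_of_nonneg_right (Finite.le_ciSup (w · k) i) (hf i k)

end WeightedSums

section EnsembleScore

variable {ι κ : Type*} [Fintype κ] {w : ι → κ → ℝ}

/-- The score of each item under the ensemble, where item `i` weighs model `k` by `w i k`. -/
def ensembleScore (w S : ι → κ → ℝ) (i : ι) : ℝ := ∑ k, w i k * S i k

lemma sum_mul_scoreGap_sub_ensembleScoreGap (S : ι → κ → ℝ) {n : ι} (hw : ∑ k, w n k = 1)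
    (m : ι) :
    ∑ k, w n k * ((S n k - S m k) - (ensembleScore w S n - ensembleScore w S m)) =
      ∑ k, (w m k - w n k) * S m k := by
  simp only [mul_sub, sub_mul, sum_sub_distrib, ← sum_mul, hw, one_mul]
  simp only [ensembleScore]
  ring

lemma sum_mul_scoreGap_sub_ensembleScoreGap_le [Finite ι] (S : ι → κ → ℝ) {δ : ℝ} (hδ : 0 ≤ δ)
    {n : ι} (hw : ∑ k, w n k = 1) (hδw : ∀ m k, |w m k - w n k| ≤ δ) (m : ι) :
    ∑ k, w n k * ((S n k - S m k) - (ensembleScore w S n - ensembleScore w S m)) ≤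
      δ * ⨆ i, ∑ k, |S i k| :=
  calc _ = ∑ k, (w m k - w n k) * S m k := sum_mul_scoreGap_sub_ensembleScoreGap S hw m
    _ ≤ δ * ∑ k, |S m k| := sum_mul_le_mul_sum_abs fun k _ => hδw m k
    _ ≤ δ * ⨆ i, ∑ k, |S i k| :=
      mul_le_mul_of_nonneg_left (Finite.le_ciSup (fun i => ∑ k, |S i k|) m) hδ

end EnsembleScore

section PlackettLuce

variable {N : ℕ} (n : Fin N)

lemma gPL_nonneg (x : Fin N → ℝ) : 0 ≤ gPL n x :=
  Real.log_nonneg (le_add_of_nonneg_right (sum_nonneg fun _ _ => (Real.exp_pos _).le))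

/-- The Plackett–Luce probability that item `m` is chosen among the items at positions `≥ n`;
meaningful only for `n ≤ m`. The summand `1` in the denominator is the contribution of `n` itself.
For `n < m` this is minus the partial derivative of `z ↦ log (1 + ∑ m > n, exp (-z m))` in the
score difference `z m = x n - x m`. -/
noncomputable def choiceProb (x : Fin N → ℝ) (m : Fin N) : ℝ :=
  Real.exp (-(x n - x m)) / (1 + ∑ j with n < j, Real.exp (-(x n - x j)))

lemma choiceProb_nonneg (x : Fin N → ℝ) (m : Fin N) : 0 ≤ choiceProb n x m := by
  unfold choiceProb
  positivity

lemma sum_choiceProb_le_one (x : Fin N → ℝ) : ∑ m with n < m, choiceProb n x m ≤ 1 := by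
  simp only [choiceProb, ← sum_div]
  exact div_le_one_of_le₀ (by linarith) (by positivity)

/-- The ambiguity of scores `x` relative to reference scores `y` at position `n`: the Bregman
divergence of `z ↦ log (1 + ∑ m > n, exp (-z m))` between the score differences `x n - x m` and
`y n - y m`, linearized at the latter. -/
noncomputable def ambiguity (x y : Fin N → ℝ) : ℝ :=
  gPL n x - gPL n y + ∑ m with n < m, choiceProb n y m * ((x n - x m) - (y n - y m))

variable {κ : Type*} [Fintype κ]

lemma gPL_eq_sum_add_sum_sub_sum_ambiguity {v : κ → ℝ} (hv : ∑ k, v k = 1)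
    (x : κ → Fin N → ℝ) (y : Fin N → ℝ) :
    gPL n y = ∑ k, v k * gPL n (x k) +
      ∑ m with n < m, choiceProb n y m * ∑ k, v k * ((x k n - x k m) - (y n - y m)) -
      ∑ k, v k * ambiguity n (x k) y := by
  have first_order :
      ∑ m with n < m, choiceProb n y m * ∑ k, v k * ((x k n - x k m) - (y n - y m)) =
        ∑ k, v k * ∑ m with n < m, choiceProb n y m * ((x k n - x k m) - (y n - y m)) := by
    simp_rw [mul_sum, mul_left_comm]
    exact sum_comm
  simp only [first_order, ambiguity, mul_add, mul_sub (v _) (gPL n _), sum_add_distrib,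
    sum_sub_distrib, ← sum_mul, hv]
  ring

lemma gPL_ensembleScore_le (S : Fin N → κ → ℝ) {w : Fin N → κ → ℝ} {δ : ℝ}
    (hw : ∑ k, w n k = 1) (hδw : ∀ m k, |w m k - w n k| ≤ δ) :
    gPL n (ensembleScore w S) ≤ ∑ k, w n k * gPL n (S · k) + δ * (⨆ m, ∑ k, |S m k|) -
      ∑ k, w n k * ambiguity n (S · k) (ensembleScore w S) := by
  obtain ⟨k, -⟩ := nonempty_of_sum_ne_zero (hw.trans_ne one_ne_zero)
  have hδ : 0 ≤ δ := (abs_nonneg _).trans (hδw n k)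
  have hS : 0 ≤ ⨆ m, ∑ k, |S m k| := Real.iSup_nonneg fun m => sum_nonneg fun k _ => abs_nonneg _
  rw [gPL_eq_sum_add_sum_sub_sum_ambiguity n hw (fun k i => S i k)]
  gcongr
  exact sum_mul_le_of_sum_le_one (fun m _ => choiceProb_nonneg n _ m) (sum_choiceProb_le_one n _)
    (fun m _ => sum_mul_scoreGap_sub_ensembleScoreGap_le S hδ hw hδw m) (mul_nonneg hδ hS)

end PlackettLuce

theorem listwise_error_ambiguity_bound_general {N : ℕ} {κ : Type*} [Fintype κ]
    (S w : Fin N → κ → ℝ) {δ : ℝ} (hsum : ∀ n, ∑ k, w n k = 1)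
    (hδw : ∀ n m k, |w n k - w m k| ≤ δ) :
    LPL (ensembleScore w S) ≤
      (∑ k, (⨆ n, w n k) * LPL (S · k)) + δ * N * (⨆ m, ∑ k, |S m k|) -
        ∑ n, ∑ k, w n k * ambiguity n (S · k) (ensembleScore w S) :=
  calc LPL (ensembleScore w S)
      ≤ ∑ n, (∑ k, w n k * gPL n (S · k) + δ * (⨆ m, ∑ k, |S m k|) -
          ∑ k, w n k * ambiguity n (S · k) (ensembleScore w S)) :=
        sum_le_sum fun n _ => gPL_ensembleScore_le n S (hsum n) (hδw · n)
    _ = ∑ n, ∑ k, w n k * gPL n (S · k) + δ * N * (⨆ m, ∑ k, |S m k|) -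
          ∑ n, ∑ k, w n k * ambiguity n (S · k) (ensembleScore w S) := by
        rw [sum_sub_distrib, sum_add_distrib, sum_const, card_univ, Fintype.card_fin,
          nsmul_eq_mul, mul_left_comm, mul_assoc]
    _ ≤ _ := by
        gcongr
        exact sum_sum_mul_le_sum_iSup_mul_sum w fun n k => gPL_nonneg n (S · k)

/-- Error-ambiguity decomposition bound for the list-wise (Plackett–Luce) loss
with item-level weights: the ensemble list-wise loss is bounded by the
max-weighted sum of basic-model losses, plus `δ·N` times the largest total
absolute score of an item, minus the weighted sum of ambiguities. -/
theorem listwise_error_ambiguity_bound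
    (N K : ℕ) (hN : 1 ≤ N) (hK : 1 ≤ K)
    (S : Fin N → Fin K → ℝ) (δ : ℝ) (hδ : 0 ≤ δ)
    (w : Fin N → Fin K → ℝ) (hw : ∀ n k, 0 ≤ w n k)
    (hsum : ∀ n, ∑ k, w n k = 1)
    (hδw : ∀ n m k, |w n k - w m k| ≤ δ)
    (Sens : Fin N → ℝ) (hSens : ∀ n, Sens n = ∑ k, w n k * S n k)
    (A : Fin N → Fin K → ℝ)
    (hA : ∀ n k, A n k =
      gPL n (fun i => S i k) - gPL n Sens +
        ∑ m ∈ Finset.univ.filter (fun m => n < m),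
          (Real.exp (-(Sens n - Sens m)) /
              (1 + ∑ j ∈ Finset.univ.filter (fun j => n < j),
                Real.exp (-(Sens n - Sens j)))) *
            ((S n k - S m k) - (Sens n - Sens m))) :
    LPL Sens ≤
      (∑ k, (⨆ n, w n k) * LPL (fun i => S i k)) +
        δ * N * (⨆ m, ∑ k, |S m k|) -
        ∑ n, ∑ k, w n k * A n k := by
  obtain rfl : Sens = ensembleScore w S := funext hSens
  obtain rfl : A = fun n k => ambiguity n (S · k) (ensembleScore w S) := funext₂ hA
  exact listwise_error_ambiguity_bound_general S w hsum hδw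
end

section
/- Let N ≥ 1 and K ≥ 1, let S_{n,k} ∈ ℝ be the scores of N items (indexed in ground-truth ranking order) under K basic models, and let w : {1,…,K} → ℝ satisfy w_k ≥ 0 and Σ_{k=1}^K w_k = 1, with the same model-level weight w_k used for every item. Define S^ens_n = Σ_{k=1}^K w_k S_{n,k}. For a score vector x : {1,…,N} → ℝ define g_n(x) = log(1 + Σ_{m=n+1}^N exp(−(x_n − x_m))) and L(x) = Σ_{n=1}^N g_n(x). For each n, k define A_{n,k} = g_n(S_{·,k}) − g_n(S^ens) + Σ_{m=n+1}^N [exp(−(S^ens_n − S^ens_m)) / (1 + Σ_{j=n+1}^N exp(−(S^ens_n − S^ens_j)))] · ((S_{n,k} − S_{m,k}) − (S^ens_n − S^ens_m)). Then each A_{n,k} ≥ 0 and L(S^ens) = Σ_{k=1}^K w_k L(S_{·,k}) − Σ_{n=1}^N Σ_{k=1}^K w_k A_{n,k}; in particular L(S^ens) ≤ Σ_{k=1}^K w_k L(S_{·,k}). -/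
/-! Writing `gₙ(x) = lse_{m ≥ n}(x) - xₙ` with `lse` the log-sum-exp function, the ambiguity
`A n k` is the gap at `S · k` between `gₙ` and its tangent at the ensemble scores. The tangent of
`lse` lies below it by Jensen's inequality for `exp` with softmax weights, so the gap is
nonnegative; averaging the gaps kills the linear terms because the ensemble is the weighted mean
of the models. -/

open Finset

section WeightedMean

variable {R E F κ : Type*} [Ring R] [AddCommGroup E] [Module R E] [AddCommGroup F] [Module R F]

theorem sum_smul_sub_sum_smul_eq_zero {s : Finset κ} {w : κ → R} (hw : ∑ k ∈ s, w k = 1)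
    (x : κ → E) : ∑ k ∈ s, w k • (x k - ∑ j ∈ s, w j • x j) = 0 := by
  simp only [smul_sub, sum_sub_distrib, ← sum_smul, hw, one_smul, sub_self]

theorem sum_smul_sub_sub_map_sub {s : Finset κ} {w : κ → R} (hw : ∑ k ∈ s, w k = 1)
    {x : κ → E} {μ : E} (hμ : μ = ∑ k ∈ s, w k • x k) (g : E → F) (φ : E →ₗ[R] F) :
    ∑ k ∈ s, w k • (g (x k) - g μ - φ (x k - μ)) = ∑ k ∈ s, w k • g (x k) - g μ := by
  have linear_part : ∑ k ∈ s, w k • φ (x k - μ) = 0 := by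
    simp only [← map_smul, ← map_sum, hμ, sum_smul_sub_sum_smul_eq_zero hw, map_zero]
  simp only [smul_sub, sum_sub_distrib, ← sum_smul, hw, one_smul, linear_part, sub_zero]

end WeightedMean

section LogSumExp

variable {ι : Type*} {s : Finset ι}

/-- The log-sum-exp function of the coordinates in `s`. -/
noncomputable def logSumExp (s : Finset ι) (x : ι → ℝ) : ℝ :=
  Real.log (∑ i ∈ s, Real.exp (x i))

/-- The softmax weights of the coordinates in `s`, i.e. the partial derivatives of
`logSumExp s`. They are meaningful only for indices in `s`. -/
noncomputable def softmax (s : Finset ι) (x : ι → ℝ) (i : ι) : ℝ :=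
  Real.exp (x i) / ∑ j ∈ s, Real.exp (x j)

theorem sum_exp_pos (hs : s.Nonempty) (x : ι → ℝ) : 0 < ∑ i ∈ s, Real.exp (x i) :=
  sum_pos (fun i _ => Real.exp_pos (x i)) hs

theorem softmax_nonneg (s : Finset ι) (x : ι → ℝ) (i : ι) : 0 ≤ softmax s x i := by
  unfold softmax
  positivity

theorem sum_softmax (hs : s.Nonempty) (x : ι → ℝ) : ∑ i ∈ s, softmax s x i = 1 := by
  simp only [softmax, ← sum_div]
  exact div_self (sum_exp_pos hs x).ne'

theorem sum_softmax_mul_exp_sub (s : Finset ι) (x y : ι → ℝ) :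
    ∑ i ∈ s, softmax s x i * Real.exp (y i - x i) =
      (∑ i ∈ s, Real.exp (y i)) / ∑ i ∈ s, Real.exp (x i) := by
  simp only [softmax, div_mul_eq_mul_div, ← Real.exp_add, add_sub_cancel, sum_div]

theorem sum_softmax_mul_sub_le_logSumExp_sub (hs : s.Nonempty) (x y : ι → ℝ) :
    ∑ i ∈ s, softmax s x i * (y i - x i) ≤ logSumExp s y - logSumExp s x := by
  have jensen : Real.exp (∑ i ∈ s, softmax s x i * (y i - x i)) ≤
      ∑ i ∈ s, softmax s x i * Real.exp (y i - x i) :=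
    convexOn_exp.map_sum_le (fun i _ => softmax_nonneg s x i) (sum_softmax hs x)
      fun _ _ => Set.mem_univ _
  have hx := sum_exp_pos hs x
  have hy := sum_exp_pos hs y
  rw [sum_softmax_mul_exp_sub, ← Real.le_log_iff_exp_le (div_pos hy hx),
    Real.log_div hy.ne' hx.ne'] at jensen
  exact jensen

end LogSumExp

section PlackettLuce

variable {N : ℕ} (n : Fin N) (x y : Fin N → ℝ)

/-- The differential of `gPL n` at `x`, in the form obtained from
`gPL n x = logSumExp (Ici n) x - x n`. -/
noncomputable def gPLDifferential : (Fin N → ℝ) →ₗ[ℝ] ℝ :=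
  (∑ m ∈ Ici n, softmax (Ici n) x m • LinearMap.proj m : (Fin N → ℝ) →ₗ[ℝ] ℝ) - LinearMap.proj n

theorem gPLDifferential_apply (v : Fin N → ℝ) :
    gPLDifferential n x v = ∑ m ∈ Ici n, softmax (Ici n) x m * v m - v n := by
  simp [gPLDifferential]

theorem one_add_sum_exp_neg_sub :
    1 + ∑ m with n < m, Real.exp (-(x n - x m)) =
      (∑ m ∈ Ici n, Real.exp (x m)) / Real.exp (x n) := by
  rw [filter_lt_eq_Ioi, ← add_sum_Ioi_eq_sum_Ici, add_div,
    div_self (Real.exp_ne_zero _), sum_div]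
  simp only [neg_sub, Real.exp_sub]

theorem gPL_eq_logSumExp_sub : gPL n x = logSumExp (Ici n) x - x n := by
  rw [gPL, one_add_sum_exp_neg_sub,
    Real.log_div (sum_exp_pos nonempty_Ici x).ne' (Real.exp_ne_zero _), Real.log_exp, logSumExp]

theorem exp_neg_sub_div_eq_softmax (m : Fin N) :
    Real.exp (-(x n - x m)) / (1 + ∑ j with n < j, Real.exp (-(x n - x j))) =
      softmax (Ici n) x m := by
  rw [one_add_sum_exp_neg_sub, neg_sub, Real.exp_sub,
    div_div_div_cancel_right₀ (Real.exp_ne_zero _), softmax]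

theorem sum_softmax_mul_gap_sub_gap :
    ∑ m with n < m, softmax (Ici n) x m * ((y n - y m) - (x n - x m)) =
      -gPLDifferential n x (y - x) := by
  calc ∑ m with n < m, softmax (Ici n) x m * ((y n - y m) - (x n - x m))
      = ∑ m ∈ Ici n, softmax (Ici n) x m * ((y n - y m) - (x n - x m)) := by
        rw [filter_lt_eq_Ioi, ← add_sum_Ioi_eq_sum_Ici, sub_self, sub_self, sub_zero, mul_zero,
          zero_add]
    _ = ∑ m ∈ Ici n, (softmax (Ici n) x m * (y - x) n - softmax (Ici n) x m * (y - x) m) :=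
        sum_congr rfl fun m _ => by simp only [Pi.sub_apply]; ring
    _ = -gPLDifferential n x (y - x) := by
        rw [sum_sub_distrib, ← sum_mul, sum_softmax nonempty_Ici, gPLDifferential_apply]
        ring

theorem gPLDifferential_sub_le : gPLDifferential n x (y - x) ≤ gPL n y - gPL n x := by
  have tangent := sum_softmax_mul_sub_le_logSumExp_sub (nonempty_Ici (a := n)) x y
  simp only [gPLDifferential_apply, gPL_eq_logSumExp_sub, Pi.sub_apply]
  linarith

end PlackettLuce

/-- List-wise error-ambiguity decomposition with shared model-level weights
(the case `δ = 0`): every ambiguity `A n k` is nonnegative, the ensemble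
list-wise loss equals the weighted average of the basic-model list-wise losses
minus the weighted ambiguities, and in particular the ensemble loss is at most
the weighted average of the basic-model losses. -/
theorem listwise_equal_weight_decomposition
    (N K : ℕ) (hN : 1 ≤ N) (hK : 1 ≤ K)
    (S : Fin N → Fin K → ℝ) (w : Fin K → ℝ)
    (hw : ∀ k, 0 ≤ w k) (hsum : ∑ k, w k = 1)
    (Sens : Fin N → ℝ) (hSens : ∀ n, Sens n = ∑ k, w k * S n k)
    (A : Fin N → Fin K → ℝ)
    (hA : ∀ n k, A n k =
      gPL n (fun i => S i k) - gPL n Sens +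
        ∑ m ∈ Finset.univ.filter (fun m => n < m),
          (Real.exp (-(Sens n - Sens m)) /
              (1 + ∑ j ∈ Finset.univ.filter (fun j => n < j),
                Real.exp (-(Sens n - Sens j)))) *
            ((S n k - S m k) - (Sens n - Sens m))) :
    (∀ n k, 0 ≤ A n k) ∧
      LPL Sens = (∑ k, w k * LPL (fun i => S i k)) - ∑ n, ∑ k, w k * A n k ∧
      LPL Sens ≤ ∑ k, w k * LPL (fun i => S i k) := by
  have A_eq (n k) : A n k = gPL n (fun i => S i k) - gPL n Sens -
      gPLDifferential n Sens ((fun i => S i k) - Sens) := by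
    simp only [hA, exp_neg_sub_div_eq_softmax]
    rw [sum_softmax_mul_gap_sub_gap n Sens fun i => S i k, ← sub_eq_add_neg]
  have A_nonneg (n k) : 0 ≤ A n k := by
    rw [A_eq]
    exact sub_nonneg.2 (gPLDifferential_sub_le n Sens _)
  have Sens_eq : Sens = ∑ k, w k • fun i => S i k := by
    ext n
    simp [hSens]
  have sum_A (n) : ∑ k, w k * A n k = ∑ k, w k * gPL n (fun i => S i k) - gPL n Sens := by
    simp only [A_eq]
    exact sum_smul_sub_sub_map_sub hsum Sens_eq (gPL n) (gPLDifferential n Sens)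
  have decomposition :
      LPL Sens = (∑ k, w k * LPL (fun i => S i k)) - ∑ n, ∑ k, w k * A n k := by
    simp only [sum_A, LPL, mul_sum, sum_sub_distrib]
    rw [sum_comm, sub_sub_cancel]
  refine ⟨A_nonneg, decomposition, decomposition.trans_le (sub_le_self _ ?_)⟩
  exact sum_nonneg fun n _ => sum_nonneg fun k _ => mul_nonneg (hw k) (A_nonneg n k)
end
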